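/- There is an absolute constant C such that the following holds. Let δ ∈ (0,1) and suppose 𝓒 has a δ-refutation test over 𝒟 with m ≥ 1 samples. Then for every ε ∈ (0,1), 𝓒 has a (γ, α)-weak agnostic learner over 𝒟 with γ = 1/(3m), α = (δ+ε)/(3m), using at most ⌈C · (m+2)³ · (1 + log(m+2)) / ε²⌉ samples. -/

import Mathlib

/-!
A refutation test distinguishes the product of a structured label distribution `μ` from randomly
labelled examples with advantage at least `1/3`. Replacing the `m` examples one at a time
by randomly labelled ones, the advantage telescopes into `m` hybrid steps. In step `i`, the change
in acceptance probability is half the correlation with the label of the function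
`x ↦ r(…, (x, 1), …) - r(…, (x, -1), …)` (`integral_sub_integral_unif`). Averaging this function
over `i` and over the randomly labelled entries, the hypothesis obtained from a random `μ`-block of
size `m` has mean correlation at least `2 / (3m)` (`integral_cor_hybridHyp`).

Averaging these hypotheses over `72 m²` independent blocks, rather than selecting the best one,
gives a single hypothesis of correlation more than `1 / (3m)` with probability `7/8`
(`bad_block_le`), since all values lie in `[-1, 1]` and Chebyshev's inequality applies. If the class
is not `δ`-correlated with `μ` nothing is known about this hypothesis, but zero is then good enough;
a fresh sample of size about `72 m² / ε²` estimates the correlation to accuracy `ε / (3m)` with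
probability `7/8` (`bad_test_le`), and the sign of the estimate decides between the two.
-/

open MeasureTheory ProbabilityTheory

noncomputable section

/-- The ±1 real value of a Boolean label (`true` encodes the label 1, `false` the label −1). -/
def sgn (b : Bool) : ℝ := if b then 1 else -1

/-- The uniform probability measure on the labels {−1, 1} (encoded as `Bool`). -/
def unifLabel : Measure Bool := (PMF.uniformOfFintype Bool).toMeasure

instance : IsProbabilityMeasure unifLabel :=
  PMF.toMeasure.isProbabilityMeasure _


/-- The correlation of a hypothesis `f : X → ℝ` with the labels under a distribution `𝒟'`
on example-label pairs: `cor_{𝒟'}(f) = E_{(x,y)∼𝒟'}[f(x)·y]`. -/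
def cor {X : Type*} [MeasurableSpace X] (D' : Measure (X × Bool)) (f : X → ℝ) : ℝ :=
  ∫ z, f z.1 * sgn z.2 ∂D'

/-- A `δ`-refutation test for the concept class `𝓒` over `𝒟` with `m` samples: a measurable
function `r : (X × {−1,1})^m → [0,1]` (the acceptance probability of a possibly randomized
algorithm, acceptance meaning output "structure") such that

* (completeness) `∫ r d(𝒟')^{⊗m} ≥ 2/3` for every label distribution `𝒟'` consistent with
  `𝒟` satisfying `sup_{c∈𝓒} cor_{𝒟'}(c) ≥ δ`; and
* (soundness) `∫ r d(𝒟 ⊗ U)^{⊗m} ≤ 1/3`. -/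
def IsRefutationTest {X : Type*} [MeasurableSpace X] (D : Measure X)
    (𝓒 : Set (X → Bool)) (δ : ℝ) (m : ℕ) (r : (Fin m → X × Bool) → ℝ) : Prop :=
  Measurable r ∧ (∀ z, r z ∈ Set.Icc (0 : ℝ) 1) ∧
    (∀ D' : Measure (X × Bool), IsProbabilityMeasure D' → D'.map Prod.fst = D →
      δ ≤ (⨆ c ∈ 𝓒, cor D' (fun x => sgn (c x))) →
      (2 : ℝ) / 3 ≤ ∫ s, r s ∂(Measure.pi fun _ : Fin m => D')) ∧
    (∫ s, r s ∂(Measure.pi fun _ : Fin m => D.prod unifLabel)) ≤ (1 : ℝ) / 3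

/-- A `(γ, α)`-weak agnostic learner for `𝓒` over `𝒟` with `S` samples: a jointly measurable
map `L : (X × {−1,1})^S × X → [−1,1]` such that for every label distribution `𝒟'` consistent
with `𝒟`, with probability at least `3/4` over `s ∼ (𝒟')^{⊗S}`,
`cor_{𝒟'}(L(s,·)) ≥ γ·sup_{c∈𝓒} cor_{𝒟'}(c) − α`. -/
def IsWeakAgnosticLearner {X : Type*} [MeasurableSpace X] (D : Measure X)
    (𝓒 : Set (X → Bool)) (γ α : ℝ) (S : ℕ)
    (L : (Fin S → X × Bool) → X → ℝ) : Prop :=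
  Measurable (Function.uncurry L) ∧ (∀ s x, L s x ∈ Set.Icc (-1 : ℝ) 1) ∧
    ∀ D' : Measure (X × Bool), IsProbabilityMeasure D' → D'.map Prod.fst = D →
      (3 / 4 : ENNReal) ≤ (Measure.pi fun _ : Fin S => D')
        {s | γ * (⨆ c ∈ 𝓒, cor D' (fun x => sgn (c x))) - α ≤ cor D' (L s)}

universe u

/-! ### Bounded functions, concentration and product measures -/

lemma abs_sgn (b : Bool) : |sgn b| = 1 := by cases b <;> simp [sgn]

lemma measurable_sgn : Measurable sgn := measurable_of_countable _

lemma integrable_of_abs_le {Ω : Type*} [MeasurableSpace Ω] {μ : Measure Ω} [IsFiniteMeasure μ]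
    {f : Ω → ℝ} (hf : Measurable f) (C : ℝ) (h : ∀ x, |f x| ≤ C) : Integrable f μ :=
  Integrable.of_bound hf.aestronglyMeasurable C (Filter.Eventually.of_forall h)

lemma abs_mul_sgn (a : ℝ) (b : Bool) : |a * sgn b| = |a| := by
  rw [abs_mul, abs_sgn, mul_one]

lemma abs_integral_le {Ω : Type*} [MeasurableSpace Ω] {μ : Measure Ω} [IsProbabilityMeasure μ]
    {f : Ω → ℝ} (C : ℝ) (h : ∀ x, |f x| ≤ C) : |∫ x, f x ∂μ| ≤ C := by
  have := norm_integral_le_of_norm_le_const (μ := μ) (f := f) (C := C)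
    (Filter.Eventually.of_forall h)
  simpa using this

lemma abs_cor_le {X : Type*} [MeasurableSpace X] (μ : Measure (X × Bool)) [IsProbabilityMeasure μ]
    {f : X → ℝ} {C : ℝ} (h : ∀ x, |f x| ≤ C) : |cor μ f| ≤ C :=
  abs_integral_le C fun z => by rw [abs_mul_sgn]; exact h _

/-- The inner supremum over an empty index (when `c ∉ 𝓒`) is `0`, so the iterated supremum is
`max (sup_{c ∈ 𝓒} cor c) 0` whenever `𝓒` omits some function; the bound by `1` covers this value as well. -/
lemma opt_le_one {X : Type*} [MeasurableSpace X] (𝓒 : Set (X → Bool)) (μ : Measure (X × Bool))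
    [IsProbabilityMeasure μ] : (⨆ c ∈ 𝓒, cor μ (fun x => sgn (c x))) ≤ 1 :=
  Real.iSup_le (fun c => Real.iSup_le
    (fun _ => (abs_le.1 (abs_cor_le μ fun x => (abs_sgn (c x)).le)).2) zero_le_one) zero_le_one

/-- Chebyshev's inequality for the empirical mean of `n ≥ 8 / t ^ 2` independent copies of a
variable with values in `[-1, 1]`. -/
lemma chebyshev_mean {Ω : Type*} [MeasurableSpace Ω] (μ : Measure Ω) [IsProbabilityMeasure μ]
    {f : Ω → ℝ} (hf : Measurable f) (hb : ∀ x, |f x| ≤ 1) {n : ℕ} (hn : 0 < n) {t : ℝ}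
    (ht : 0 < t) (hnt : 8 ≤ n * t ^ 2) :
    (Measure.pi fun _ : Fin n => μ) {s | t ≤ |(1 / (n : ℝ)) * ∑ i, f (s i) - ∫ x, f x ∂μ|}
      ≤ 1 / 8 := by
  have hL : MemLp f 2 μ := MemLp.of_bound hf.aestronglyMeasurable 1 (Filter.Eventually.of_forall hb)
  have hn' : (0 : ℝ) < n := by exact_mod_cast hn
  set P := Measure.pi fun _ : Fin n => μ
  let Y : (Fin n → Ω) → ℝ := ∑ i, fun s => f (s i)
  have hYL : MemLp Y 2 P := by
    apply memLp_finsetSum'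
    intro i _
    exact hL.comp_measurePreserving (measurePreserving_eval (fun _ : Fin n => μ) i)
  have hvar : Var[Y; P] ≤ n := by
    have h1 := variance_sum_pi (μ := fun _ : Fin n => μ) (X := fun _ => f) (fun _ => hL)
    have h2 : Var[f; μ] ≤ 1 := by
      refine (variance_le_sq_of_bounded (a := -1) (b := 1)
        (Filter.Eventually.of_forall fun x => abs_le.1 (hb x)) hf.aemeasurable).trans ?_
      norm_num
    calc Var[Y; P] = ∑ _i : Fin n, Var[f; μ] := h1
      _ ≤ ∑ _i : Fin n, (1 : ℝ) := Finset.sum_le_sum fun _ _ => h2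
      _ = n := by simp
  have hmean : P[Y] = n * ∫ x, f x ∂μ := by
    have : ∀ s, Y s = ∑ i, f (s i) := fun s => by simp [Y]
    simp_rw [this]
    rw [integral_finsetSum]
    · have : ∀ i : Fin n, ∫ s, f (s i) ∂P = ∫ x, f x ∂μ := fun i =>
        integral_comp_eval (μ := fun _ : Fin n => μ) hf.aestronglyMeasurable
      simp [this]
    · intro i _
      exact integrable_of_abs_le (hf.comp (measurable_pi_apply i)) 1 fun s => hb _
  have hch := meas_ge_le_variance_div_sq hYL (c := n * t) (by positivity)
  have hsub : {s | t ≤ |(1 / (n : ℝ)) * ∑ i, f (s i) - ∫ x, f x ∂μ|} ⊆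
      {s | n * t ≤ |Y s - P[Y]|} := by
    intro s hs
    simp only [Set.mem_ofPred_eq] at hs ⊢
    have : Y s - P[Y] = n * ((1 / (n : ℝ)) * ∑ i, f (s i) - ∫ x, f x ∂μ) := by
      rw [hmean]; simp [Y]; field_simp
    rw [this, abs_mul, abs_of_pos hn']
    gcongr
  refine (measure_mono hsub).trans (hch.trans ?_)
  rw [show (1 / 8 : ENNReal) = ENNReal.ofReal (1 / 8) by
    rw [ENNReal.ofReal_div_of_pos (by norm_num)]; simp]
  apply ENNReal.ofReal_le_ofReal
  rw [div_le_div_iff₀ (by positivity) (by norm_num)]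
  nlinarith

/-- Taking the coordinates in `p` from a sample of `μ^ι` and the others from an independent sample
of `ρ^ι` yields a sample of the mixed product measure. -/
lemma map_mix_pi {ι : Type*} [Fintype ι] {Z : Type*} [MeasurableSpace Z] (p : ι → Prop)
    [DecidablePred p] (μ ρ : Measure Z) [IsProbabilityMeasure μ] [IsProbabilityMeasure ρ] :
    MeasurePreserving (fun q : (ι → Z) × (ι → Z) => fun j => if p j then q.1 j else q.2 j)
      ((Measure.pi fun _ => μ).prod (Measure.pi fun _ => ρ))
      (Measure.pi fun j => if p j then μ else ρ) := by
  have hm : Measurable (fun q : (ι → Z) × (ι → Z) => fun j => if p j then q.1 j else q.2 j) := by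
    refine measurable_pi_lambda _ fun j => ?_
    by_cases h : p j <;> simp only [h, if_true, if_false] <;> fun_prop
  have : ∀ j, IsProbabilityMeasure (if p j then μ else ρ) := fun j => by
    split_ifs <;> infer_instance
  refine ⟨hm, (Measure.pi_eq fun s hs => ?_).symm⟩
  rw [Measure.map_apply hm (MeasurableSet.univ_pi hs)]
  have hpre : (fun q : (ι → Z) × (ι → Z) => fun j => if p j then q.1 j else q.2 j) ⁻¹'
      Set.pi Set.univ s = (Set.pi Set.univ fun j => if p j then s j else Set.univ) ×ˢ
        (Set.pi Set.univ fun j => if p j then Set.univ else s j) := by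
    ext q
    simp only [Set.mem_preimage, Set.mem_pi, Set.mem_univ, true_implies, Set.mem_prod]
    rw [← forall_and]
    refine forall_congr' fun j => ?_
    by_cases h : p j <;> simp [h]
  rw [hpre, Measure.prod_prod, Measure.pi_pi, Measure.pi_pi, ← Finset.prod_mul_distrib]
  refine Finset.prod_congr rfl fun j _ => ?_
  by_cases h : p j <;> simp [h]

/-- Resampling one coordinate of a product measure from `κ` replaces that factor by `κ`. -/
lemma map_update_pi {ι : Type*} [Fintype ι] [DecidableEq ι] {Z : Type*} [MeasurableSpace Z]
    (ν : ι → Measure Z) [∀ i, IsProbabilityMeasure (ν i)] (i : ι) (κ : Measure Z)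
    [IsProbabilityMeasure κ] :
    MeasurePreserving (fun q : (ι → Z) × Z => Function.update q.1 i q.2)
      ((Measure.pi ν).prod κ) (Measure.pi (Function.update ν i κ)) := by
  have hm : Measurable (fun q : (ι → Z) × Z => Function.update q.1 i q.2) := by
    refine measurable_pi_lambda _ fun j => ?_
    by_cases h : j = i
    · subst h; simpa using measurable_snd
    · simp only [Function.update_of_ne h]; fun_prop
  have : ∀ j, IsProbabilityMeasure (Function.update ν i κ j) := fun j => by
    by_cases h : j = i
    · subst h; simpa
    · rw [Function.update_of_ne h]; infer_instance
  refine ⟨hm, (Measure.pi_eq fun s hs => ?_).symm⟩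
  rw [Measure.map_apply hm (MeasurableSet.univ_pi hs)]
  have hpre : (fun q : (ι → Z) × Z => Function.update q.1 i q.2) ⁻¹'
      Set.pi Set.univ s = (Set.pi Set.univ (Function.update s i Set.univ)) ×ˢ s i := by
    ext q
    simp only [Set.mem_preimage, Set.mem_pi, Set.mem_univ, true_implies, Set.mem_prod]
    constructor
    · intro h
      refine ⟨fun j => ?_, by simpa using h i⟩
      by_cases hj : j = i
      · subst hj; simp
      · simpa [hj] using h j
    · rintro ⟨h, h'⟩ j
      by_cases hj : j = i
      · subst hj; simpa using h'
      · simpa [hj] using h j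
  rw [hpre, Measure.prod_prod, Measure.pi_pi, ← Finset.mul_prod_erase _ _ (Finset.mem_univ i),
    ← Finset.mul_prod_erase Finset.univ (fun j => Function.update ν i κ j (s j))
      (Finset.mem_univ i)]
  simp only [Function.update_self, measure_univ, one_mul]
  rw [mul_comm]
  congr 1
  refine Finset.prod_congr rfl fun j hj => ?_
  simp [Finset.ne_of_mem_erase hj]

lemma measurePreserving_uncurry {ι κ : Type*} [Fintype ι] [Fintype κ] {Z : Type*}
    [MeasurableSpace Z] (μ : Measure Z) [IsProbabilityMeasure μ] :
    MeasurePreserving (MeasurableEquiv.curry ι κ Z).symm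
      (Measure.pi fun _ : ι => Measure.pi fun _ : κ => μ) (Measure.pi fun _ : ι × κ => μ) := by
  refine ⟨(MeasurableEquiv.curry ι κ Z).symm.measurable, (Measure.pi_eq fun s hs => ?_).symm⟩
  rw [MeasurableEquiv.map_apply]
  have hpre : (MeasurableEquiv.curry ι κ Z).symm ⁻¹' Set.pi Set.univ s =
      Set.pi Set.univ fun k => Set.pi Set.univ fun j => s (k, j) := by
    ext q
    simp [Set.mem_pi, MeasurableEquiv.coe_curry_symm, Function.uncurry]
  rw [hpre, Measure.pi_pi]
  simp_rw [Measure.pi_pi]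
  rw [Fintype.prod_prod_type]

/-- A sample of size `T * m + N` consists of `T` independent blocks of size `m` and an independent
fresh sample of size `N`. The identification does not depend on the underlying measure. -/
lemma exists_split (Z : Type*) [MeasurableSpace Z] (T m N : ℕ) :
    ∃ φ : (Fin (T * m + N) → Z) ≃ᵐ (Fin T → Fin m → Z) × (Fin N → Z),
      ∀ μ : Measure Z, IsProbabilityMeasure μ →
        MeasurePreserving φ (Measure.pi fun _ => μ)
          ((Measure.pi fun _ => Measure.pi fun _ => μ).prod (Measure.pi fun _ => μ)) := by
  let e : (Fin T × Fin m) ⊕ Fin N ≃ Fin (T * m + N) :=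
    (Equiv.sumCongr finProdFinEquiv (Equiv.refl _)).trans finSumFinEquiv
  let ψ := ((MeasurableEquiv.prodCongr (MeasurableEquiv.curry (Fin T) (Fin m) Z).symm
    (MeasurableEquiv.refl (Fin N → Z))).trans
      (MeasurableEquiv.sumPiEquivProdPi fun _ : (Fin T × Fin m) ⊕ Fin N => Z).symm).trans
        (MeasurableEquiv.piCongrLeft (fun _ => Z) e)
  refine ⟨ψ.symm, fun μ _ => MeasurePreserving.symm ψ ?_⟩
  have h1 := (measurePreserving_uncurry (ι := Fin T) (κ := Fin m) μ).prod
    (MeasurePreserving.id (Measure.pi fun _ : Fin N => μ))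
  have h2 := measurePreserving_sumPiEquivProdPi_symm
    (fun _ : (Fin T × Fin m) ⊕ Fin N => μ)
  have h3 := measurePreserving_piCongrLeft (fun _ => μ) e
  exact h3.comp (h2.comp h1)

lemma integral_unifLabel (f : Bool → ℝ) :
    ∫ b, f b ∂unifLabel = (f true + f false) / 2 := by
  rw [unifLabel, PMF.integral_eq_sum]
  simp
  ring

/-! ### The hybrid argument -/

/-- Replacing the label by a uniform one changes the expectation of `g` by half the correlation of
the label-flip difference of `g`: pointwise, `g (x, y)` minus the average of `g (x, ±1)` is
`y * (g (x, 1) - g (x, -1)) / 2`. -/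
lemma integral_sub_integral_unif {X : Type*} [MeasurableSpace X] {D : Measure X}
    [IsProbabilityMeasure D] {μ : Measure (X × Bool)} [IsProbabilityMeasure μ]
    (hD : μ.map Prod.fst = D) {g : X × Bool → ℝ} (hg : Measurable g) (hb : ∀ z, |g z| ≤ 1) :
    cor μ (fun x => g (x, true) - g (x, false)) =
      2 * (∫ z, g z ∂μ - ∫ z, g z ∂(D.prod unifLabel)) := by
  have hm : Measurable fun x => (g (x, true) + g (x, false)) / 2 := by fun_prop
  have hb' : ∀ x, |(g (x, true) + g (x, false)) / 2| ≤ 1 := fun x => by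
    have h1 := abs_le.1 (hb (x, true)); have h2 := abs_le.1 (hb (x, false))
    rw [abs_le]; constructor <;> linarith
  have h1 : ∫ z, g z ∂(D.prod unifLabel) = ∫ z, (g (z.1, true) + g (z.1, false)) / 2 ∂μ := by
    rw [integral_prod _ (integrable_of_abs_le hg 1 hb)]
    simp_rw [integral_unifLabel]
    rw [← hD, integral_map measurable_fst.aemeasurable hm.aestronglyMeasurable]
  have h2 : Integrable (fun z : X × Bool => (g (z.1, true) + g (z.1, false)) / 2) μ :=
    integrable_of_abs_le (hm.comp measurable_fst) 1 fun z => hb' z.1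
  rw [h1, ← integral_sub (integrable_of_abs_le hg 1 hb) h2, ← integral_const_mul]
  refine integral_congr_ae (Filter.Eventually.of_forall fun z => ?_)
  obtain ⟨x, b⟩ := z
  cases b <;> simp [sgn] <;> ring

/-- The effect on the test `r` of the label attached to the point `x` placed at position `i` of the
sample `v`; the entry `v i` is ignored. -/
def flipGap {X : Type*} {m : ℕ} (r : (Fin m → X × Bool) → ℝ) (i : Fin m)
    (v : Fin m → X × Bool) (x : X) : ℝ :=
  r (Function.update v i (x, true)) - r (Function.update v i (x, false))

/-- The hybrid sample with its first `i` entries from `z` and the remaining ones from `w`. -/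
def mix {Z : Type*} {m : ℕ} (i : ℕ) (z w : Fin m → Z) : Fin m → Z :=
  fun j => if (j : ℕ) < i then z j else w j

/-- The hybrid hypothesis built from a block `z`: the label-flip difference of `r`, averaged over
the position `i` of the test point and over the randomly labelled entries of the hybrid sample.
The latter are integrated out exactly against `𝒟 ⊗ U`, which makes the hypothesis a deterministic
function of `z`. -/
def hybridHyp {X : Type*} [MeasurableSpace X] (D : Measure X) {m : ℕ}
    (r : (Fin m → X × Bool) → ℝ) (z : Fin m → X × Bool) (x : X) : ℝ :=
  (1 / (m : ℝ)) * ∑ i : Fin m,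
    ∫ w, flipGap r i (mix i z w) x ∂(Measure.pi fun _ => D.prod unifLabel)

lemma abs_flipGap_le {X : Type*} {m : ℕ} {r : (Fin m → X × Bool) → ℝ}
    (h01 : ∀ z, r z ∈ Set.Icc (0 : ℝ) 1) (i : Fin m)
    (v : Fin m → X × Bool) (x : X) : |flipGap r i v x| ≤ 1 := by
  have h1 := h01 (Function.update v i (x, true))
  have h2 := h01 (Function.update v i (x, false))
  rw [flipGap, abs_le]; constructor <;> linarith [h1.1, h1.2, h2.1, h2.2]

section hybrid

variable {X : Type*} [MeasurableSpace X] {m : ℕ} {r : (Fin m → X × Bool) → ℝ}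

lemma measurable_update_pair (i : Fin m) (b : Bool) :
    Measurable fun q : (Fin m → X × Bool) × X => Function.update q.1 i (q.2, b) := by
  refine measurable_pi_lambda _ fun j => ?_
  by_cases h : j = i
  · subst h; simp only [Function.update_self]; fun_prop
  · simp only [Function.update_of_ne h]; fun_prop

lemma measurable_flipGap (hr : Measurable r) (i : Fin m) :
    Measurable fun q : (Fin m → X × Bool) × X => flipGap r i q.1 q.2 :=
  (hr.comp (measurable_update_pair i true)).sub (hr.comp (measurable_update_pair i false))

lemma measurable_mix {Z : Type*} [MeasurableSpace Z] (i : ℕ) :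
    Measurable fun q : (Fin m → Z) × (Fin m → Z) => mix i q.1 q.2 := by
  refine measurable_pi_lambda _ fun j => ?_
  by_cases h : (j : ℕ) < i <;> simp only [mix, h, if_true, if_false] <;> fun_prop

lemma measurable_hybridHyp (D : Measure X) [IsProbabilityMeasure D] (hr : Measurable r) :
    Measurable fun q : (Fin m → X × Bool) × X => hybridHyp D r q.1 q.2 := by
  refine Measurable.const_mul (Finset.measurable_sum _ fun i _ => ?_) _
  have : Measurable fun q : ((Fin m → X × Bool) × X) × (Fin m → X × Bool) =>
      flipGap r i (mix i q.1.1 q.2) q.1.2 :=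
    (measurable_flipGap hr i).comp
      (((measurable_mix (i : ℕ)).comp ((measurable_fst.comp measurable_fst).prodMk
        measurable_snd)).prodMk (measurable_snd.comp measurable_fst))
  exact this.stronglyMeasurable.integral_prod_right'.measurable

lemma abs_mean_le {n : ℕ} {a : Fin n → ℝ} (h : ∀ i, |a i| ≤ 1) :
    |(1 / (n : ℝ)) * ∑ i, a i| ≤ 1 := by
  rw [abs_mul, abs_of_nonneg (by positivity : (0 : ℝ) ≤ 1 / n)]
  have h1 : |∑ i, a i| ≤ n :=
    (Finset.abs_sum_le_sum_abs _ _).trans ((Finset.sum_le_sum fun i _ => h i).trans (by simp))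
  calc 1 / (n : ℝ) * |∑ i, a i| ≤ 1 / (n : ℝ) * n := by gcongr
    _ ≤ 1 := by
      rw [one_div, inv_mul_eq_div]; exact div_self_le_one _

lemma abs_hybridHyp_le (D : Measure X) [IsProbabilityMeasure D]
    (h01 : ∀ z, r z ∈ Set.Icc (0 : ℝ) 1) (z : Fin m → X × Bool) (x : X) :
    |hybridHyp D r z x| ≤ 1 :=
  abs_mean_le fun i => abs_integral_le 1 fun _ => abs_flipGap_le h01 i _ x

lemma cor_mean (μ : Measure (X × Bool)) [IsProbabilityMeasure μ] {n : ℕ} {f : Fin n → X → ℝ}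
    (hf : ∀ k, Measurable (f k)) (hb : ∀ k x, |f k x| ≤ 1) :
    cor μ (fun x => (1 / (n : ℝ)) * ∑ k, f k x) = (1 / (n : ℝ)) * ∑ k, cor μ (f k) := by
  unfold cor
  rw [← integral_finsetSum, ← integral_const_mul]
  · refine integral_congr_ae (Filter.Eventually.of_forall fun z => ?_)
    simp only [mul_assoc, Finset.sum_mul]
  · intro k _
    refine integrable_of_abs_le (((hf k).comp measurable_fst).mul
      (measurable_sgn.comp measurable_snd)) 1 fun z => ?_
    exact (abs_mul_sgn _ _).le.trans (hb _ _)

lemma measurable_cor {Ω : Type*} [MeasurableSpace Ω] (μ : Measure (X × Bool))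
    [IsProbabilityMeasure μ] {f : Ω → X → ℝ} (hf : Measurable fun q : Ω × X => f q.1 q.2) :
    Measurable fun ω => cor μ (f ω) := by
  have : Measurable fun q : Ω × (X × Bool) => f q.1 q.2.1 * sgn q.2.2 :=
    (hf.comp (measurable_fst.prodMk (measurable_fst.comp measurable_snd))).mul
      (measurable_sgn.comp (measurable_snd.comp measurable_snd))
  exact this.stronglyMeasurable.integral_prod_right'.measurable

lemma cor_integral {Ω : Type*} [MeasurableSpace Ω] (P : Measure Ω) [IsProbabilityMeasure P]
    (μ : Measure (X × Bool)) [IsProbabilityMeasure μ] {f : Ω → X → ℝ}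
    (hf : Measurable fun q : Ω × X => f q.1 q.2) (hb : ∀ ω x, |f ω x| ≤ 1) :
    cor μ (fun x => ∫ ω, f ω x ∂P) = ∫ ω, cor μ (f ω) ∂P := by
  unfold cor
  simp_rw [← integral_mul_const]
  refine integral_integral_swap (integrable_of_abs_le ?_ 1 fun q => ?_)
  · exact (hf.comp (measurable_snd.prodMk (measurable_fst.comp measurable_fst))).mul
      (measurable_sgn.comp (measurable_snd.comp measurable_fst))
  · exact (abs_mul_sgn _ _).le.trans (hb _ _)

/-- One hybrid step: the mean correlation of `flipGap r i` is twice the gap of `r` between having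
a `μ`-example and a randomly labelled example at position `i`. -/
lemma integral_cor_flipGap {D : Measure X}
    [IsProbabilityMeasure D] {μ : Measure (X × Bool)} [IsProbabilityMeasure μ]
    (hD : μ.map Prod.fst = D) (hr : Measurable r) (h01 : ∀ z, r z ∈ Set.Icc (0 : ℝ) 1)
    (i : Fin m) (ν : Fin m → Measure (X × Bool)) [∀ j, IsProbabilityMeasure (ν j)] :
    ∫ v, cor μ (flipGap r i v) ∂(Measure.pi ν) =
      2 * (∫ v, r v ∂(Measure.pi (Function.update ν i μ)) -
        ∫ v, r v ∂(Measure.pi (Function.update ν i (D.prod unifLabel)))) := by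
  have hb : ∀ v, |r v| ≤ 1 := fun v => by rw [abs_of_nonneg (h01 v).1]; exact (h01 v).2
  have key : ∀ (κ : Measure (X × Bool)) [IsProbabilityMeasure κ],
      ∫ v, r v ∂(Measure.pi (Function.update ν i κ)) =
        ∫ v, ∫ a, r (Function.update v i a) ∂κ ∂(Measure.pi ν) := by
    intro κ _
    have hmp := map_update_pi ν i κ
    rw [← hmp.map_eq, integral_map hmp.measurable.aemeasurable hr.aestronglyMeasurable]
    exact integral_prod _ (integrable_of_abs_le (hr.comp hmp.measurable) 1 fun _ => hb _)
  have hint : ∀ (κ : Measure (X × Bool)) [IsProbabilityMeasure κ],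
      Integrable (fun v => ∫ a, r (Function.update v i a) ∂κ) (Measure.pi ν) := by
    intro κ _
    have hmp := map_update_pi ν i κ
    exact (integrable_of_abs_le (μ := (Measure.pi ν).prod κ) (hr.comp hmp.measurable) 1
      fun _ => hb _).integral_prod_left
  rw [key μ, key (D.prod unifLabel), ← integral_sub (hint _) (hint _), ← integral_const_mul]
  refine integral_congr_ae (Filter.Eventually.of_forall fun v => ?_)
  have hu : Measurable fun a : X × Bool => Function.update v i a := measurable_update v
  exact integral_sub_integral_unif hD (g := fun a => r (Function.update v i a))
    (hr.comp hu) fun _ => hb _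

/-- The hybrid steps telescope: the mean correlation of the hybrid hypothesis is `2 / m` times
the advantage of `r` in distinguishing `μ` from randomly labelled examples. -/
lemma integral_cor_hybridHyp {D : Measure X}
    [IsProbabilityMeasure D] {μ : Measure (X × Bool)} [IsProbabilityMeasure μ]
    (hD : μ.map Prod.fst = D) (hr : Measurable r) (h01 : ∀ z, r z ∈ Set.Icc (0 : ℝ) 1) :
    ∫ z, cor μ (hybridHyp D r z) ∂(Measure.pi fun _ : Fin m => μ) =
      2 / (m : ℝ) * (∫ v, r v ∂(Measure.pi fun _ : Fin m => μ) -
        ∫ v, r v ∂(Measure.pi fun _ : Fin m => D.prod unifLabel)) := by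
  set ρ := D.prod unifLabel with hρ
  let P := Measure.pi fun _ : Fin m => ρ
  -- `fam i` is the family of factors of the `i`-th hybrid; `H i` is the acceptance probability.
  let fam : ℕ → Fin m → Measure (X × Bool) := fun i j => if (j : ℕ) < i then μ else ρ
  have hfam : ∀ i j, IsProbabilityMeasure (fam i j) := fun i j => by
    simp only [fam]; split_ifs <;> infer_instance
  let H : ℕ → ℝ := fun i => ∫ v, r v ∂(Measure.pi (fam i))
  have hmeas : ∀ i : Fin m, Measurable fun q : ((Fin m → X × Bool) × X) × (Fin m → X × Bool) =>
      flipGap r i (mix i q.1.1 q.2) q.1.2 := fun i =>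
    (measurable_flipGap hr i).comp
      (((measurable_mix (i : ℕ)).comp ((measurable_fst.comp measurable_fst).prodMk
        measurable_snd)).prodMk (measurable_snd.comp measurable_fst))
  have hcorb : ∀ i v, |cor μ (flipGap r i v)| ≤ 1 := fun i v =>
    abs_cor_le μ (abs_flipGap_le h01 i v)
  have hcorm : ∀ i, Measurable fun v => cor μ (flipGap r i v) := fun i =>
    measurable_cor μ (measurable_flipGap hr i)
  have hcor : ∀ z, cor μ (hybridHyp D r z) =
      (1 / (m : ℝ)) * ∑ i : Fin m, ∫ w, cor μ (flipGap r i (mix i z w)) ∂P := by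
    intro z
    unfold hybridHyp
    rw [cor_mean μ (f := fun i x => ∫ w, flipGap r i (mix i z w) x ∂P)]
    · congr 1
      refine Finset.sum_congr rfl fun i _ => ?_
      refine cor_integral P μ (f := fun w => flipGap r i (mix i z w)) ?_ fun w x =>
        abs_flipGap_le h01 i _ x
      exact (hmeas i).comp ((measurable_const.prodMk measurable_snd).prodMk measurable_fst)
    · intro i
      exact ((hmeas i).stronglyMeasurable.integral_prod_right' (ν := P)).measurable.comp
        (measurable_const.prodMk measurable_id)
    · exact fun i x => abs_integral_le 1 fun _ => abs_flipGap_le h01 i _ x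
  have hcorm2 : ∀ i : Fin m, Measurable fun q : (Fin m → X × Bool) × (Fin m → X × Bool) =>
      cor μ (flipGap r i (mix i q.1 q.2)) := fun i => (hcorm i).comp (measurable_mix (i : ℕ))
  have hstep : ∀ i : Fin m, ∫ z, ∫ w, cor μ (flipGap r i (mix i z w)) ∂P
      ∂(Measure.pi fun _ : Fin m => μ) = 2 * (H (i + 1) - H i) := by
    intro i
    have hmp := map_mix_pi (fun j : Fin m => (j : ℕ) < (i : ℕ)) μ ρ
    have h1 : ∫ z, ∫ w, cor μ (flipGap r i (mix i z w)) ∂P ∂(Measure.pi fun _ : Fin m => μ) =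
        ∫ v, cor μ (flipGap r i v) ∂(Measure.pi (fam i)) := by
      have : Measure.pi (fam i) = _ := hmp.map_eq.symm
      rw [this, integral_map hmp.measurable.aemeasurable (hcorm i).aestronglyMeasurable]
      exact (integral_prod _ (integrable_of_abs_le (hcorm2 i) 1 fun _ => hcorb _ _)).symm
    rw [h1, integral_cor_flipGap hD hr h01 i (fam i)]
    have e1 : Function.update (fam i) i μ = fam (i + 1) := by
      funext j
      by_cases h : j = i
      · subst h; simp [fam]
      · have h' : (j : ℕ) ≠ i := fun h' => h (Fin.ext h')
        have : ((j : ℕ) < i) ↔ ((j : ℕ) < i + 1) := by omega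
        simp only [Function.update_of_ne h, fam, this]
    have e2 : Function.update (fam i) i ρ = fam i := by
      funext j
      by_cases h : j = i
      · subst h; simp [fam]
      · simp [Function.update_of_ne h]
    rw [e1, e2]
  simp_rw [hcor]
  rw [integral_const_mul, integral_finsetSum]
  · simp_rw [hstep]
    rw [Fin.sum_univ_eq_sum_range (fun i => 2 * (H (i + 1) - H i)) m, ← Finset.mul_sum,
      Finset.sum_range_sub]
    have hm : H m = ∫ v, r v ∂(Measure.pi fun _ : Fin m => μ) := by
      simp [H, fam]
    have h0 : H 0 = ∫ v, r v ∂(Measure.pi fun _ : Fin m => ρ) := by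
      simp [H, fam]
    rw [hm, h0]; ring
  · intro i _
    exact (integrable_of_abs_le (μ := (Measure.pi fun _ : Fin m => μ).prod P) (hcorm2 i) 1
      fun _ => hcorb _ _).integral_prod_left

-- Unfolding these hypotheses during unification is prohibitively slow.
attribute [irreducible] hybridHyp

end hybrid

/-! ### The learner and its two failure events -/

/-- The average of the hybrid hypotheses of the `T` blocks of `a`. -/
def avgHyp {X : Type*} [MeasurableSpace X] (D : Measure X) {m T : ℕ}
    (r : (Fin m → X × Bool) → ℝ) (a : Fin T → Fin m → X × Bool) (x : X) : ℝ :=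
  (1 / (T : ℝ)) * ∑ k, hybridHyp D r (a k) x

/-- The empirical correlation of `f` on the labelled sample `b`. -/
def empCor {X : Type*} {N : ℕ} (f : X → ℝ) (b : Fin N → X × Bool) : ℝ :=
  (1 / (N : ℝ)) * ∑ n, f (b n).1 * sgn (b n).2

open Classical in
/-- The learner: the averaged hybrid hypothesis of the training blocks if its empirical correlation
on the fresh sample is positive, and the zero hypothesis otherwise. -/
def learner {X : Type*} [MeasurableSpace X] (D : Measure X) {m T N : ℕ}
    (r : (Fin m → X × Bool) → ℝ) (q : (Fin T → Fin m → X × Bool) × (Fin N → X × Bool))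
    (x : X) : ℝ :=
  if 0 < empCor (avgHyp D r q.1) q.2 then avgHyp D r q.1 x else 0

section learner

variable {X : Type*} [MeasurableSpace X] {m T N : ℕ} {r : (Fin m → X × Bool) → ℝ}

lemma measurable_avgHyp (D : Measure X) [IsProbabilityMeasure D] (hr : Measurable r) :
    Measurable fun q : (Fin T → Fin m → X × Bool) × X => avgHyp D r q.1 q.2 := by
  unfold avgHyp
  refine Measurable.const_mul (Finset.measurable_sum _ fun k _ => ?_) _
  have h : Measurable fun q : (Fin T → Fin m → X × Bool) × X => (q.1 k, q.2) :=
    ((measurable_pi_apply k).comp measurable_fst).prodMk measurable_snd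
  exact (measurable_hybridHyp D hr).comp h

lemma abs_avgHyp_le (D : Measure X) [IsProbabilityMeasure D]
    (h01 : ∀ z, r z ∈ Set.Icc (0 : ℝ) 1) (a : Fin T → Fin m → X × Bool) (x : X) :
    |avgHyp D r a x| ≤ 1 :=
  abs_mean_le fun k => abs_hybridHyp_le D h01 (a k) x

lemma cor_avgHyp (D : Measure X) [IsProbabilityMeasure D] (hr : Measurable r)
    (h01 : ∀ z, r z ∈ Set.Icc (0 : ℝ) 1) (μ : Measure (X × Bool)) [IsProbabilityMeasure μ]
    (a : Fin T → Fin m → X × Bool) :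
    cor μ (avgHyp D r a) = (1 / (T : ℝ)) * ∑ k, cor μ (hybridHyp D r (a k)) :=
  cor_mean μ (fun _ => (measurable_hybridHyp D hr).comp
    (measurable_const.prodMk measurable_id)) fun _ x => abs_hybridHyp_le D h01 _ x

attribute [irreducible] avgHyp

lemma measurable_empCor (D : Measure X) [IsProbabilityMeasure D] (hr : Measurable r) :
    Measurable fun q : (Fin T → Fin m → X × Bool) × (Fin N → X × Bool) =>
      empCor (avgHyp D r q.1) q.2 := by
  unfold empCor
  refine Measurable.const_mul (Finset.measurable_sum _ fun n _ => ?_) _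
  have h : Measurable fun q : (Fin T → Fin m → X × Bool) × (Fin N → X × Bool) => q.2 n :=
    (measurable_pi_apply n).comp measurable_snd
  have h' : Measurable fun q : (Fin T → Fin m → X × Bool) × (Fin N → X × Bool) =>
      (q.1, (q.2 n).1) := measurable_fst.prodMk (measurable_fst.comp h)
  exact ((measurable_avgHyp D hr).comp h').mul
    (measurable_sgn.comp (measurable_snd.comp h))

lemma measurable_learner (D : Measure X) [IsProbabilityMeasure D] (hr : Measurable r) :
    Measurable fun q : ((Fin T → Fin m → X × Bool) × (Fin N → X × Bool)) × X =>
      learner D r q.1 q.2 := by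
  refine Measurable.ite ?_ ((measurable_avgHyp D hr).comp
    ((measurable_fst.comp measurable_fst).prodMk measurable_snd)) measurable_const
  exact measurableSet_lt measurable_const ((measurable_empCor D hr).comp measurable_fst)

lemma learner_mem (D : Measure X) [IsProbabilityMeasure D]
    (h01 : ∀ z, r z ∈ Set.Icc (0 : ℝ) 1)
    (q : (Fin T → Fin m → X × Bool) × (Fin N → X × Bool)) (x : X) :
    learner D r q x ∈ Set.Icc (-1 : ℝ) 1 := by
  unfold learner
  split_ifs
  · exact abs_le.1 (abs_avgHyp_le D h01 q.1 x)
  · norm_num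

/-- With probability at least `7/8`, the averaged hypothesis has correlation within `t` of the mean
correlation of a hybrid hypothesis. -/
lemma bad_block_le (D : Measure X) [IsProbabilityMeasure D] (hr : Measurable r)
    (h01 : ∀ z, r z ∈ Set.Icc (0 : ℝ) 1) (μ : Measure (X × Bool)) [IsProbabilityMeasure μ]
    (hT : 0 < T) {t : ℝ} (ht : 0 < t) (hTt : 8 ≤ T * t ^ 2) :
    ((Measure.pi fun _ : Fin T => Measure.pi fun _ : Fin m => μ).prod
      (Measure.pi fun _ : Fin N => μ))
      {q | t ≤ |cor μ (avgHyp D r q.1) -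
        ∫ z, cor μ (hybridHyp D r z) ∂(Measure.pi fun _ : Fin m => μ)|} ≤ 1 / 8 := by
  have h := chebyshev_mean (Measure.pi fun _ : Fin m => μ)
    (measurable_cor μ (measurable_hybridHyp D hr))
    (fun z => abs_cor_le μ (abs_hybridHyp_le D h01 z)) hT ht hTt
  have hset : {q : (Fin T → Fin m → X × Bool) × (Fin N → X × Bool) |
      t ≤ |cor μ (avgHyp D r q.1) -
        ∫ z, cor μ (hybridHyp D r z) ∂(Measure.pi fun _ : Fin m => μ)|} =
      {a | t ≤ |(1 / (T : ℝ)) * ∑ k, cor μ (hybridHyp D r (a k)) -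
        ∫ z, cor μ (hybridHyp D r z) ∂(Measure.pi fun _ : Fin m => μ)|} ×ˢ Set.univ := by
    ext q
    simp [cor_avgHyp D hr h01 μ q.1]
  rw [hset, Measure.prod_prod, measure_univ, mul_one]
  exact h

/-- With probability at least `7/8`, the empirical correlation of the averaged hypothesis on the
fresh sample is within `t` of its true correlation. Conditionally on the training blocks the
hypothesis is fixed, so Chebyshev's inequality applies on every slice. -/
lemma bad_test_le (D : Measure X) [IsProbabilityMeasure D] (hr : Measurable r)
    (h01 : ∀ z, r z ∈ Set.Icc (0 : ℝ) 1) (μ : Measure (X × Bool)) [IsProbabilityMeasure μ]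
    (hN : 0 < N) {t : ℝ} (ht : 0 < t) (hNt : 8 ≤ N * t ^ 2) :
    ((Measure.pi fun _ : Fin T => Measure.pi fun _ : Fin m => μ).prod
      (Measure.pi fun _ : Fin N => μ))
      {q | t ≤ |empCor (avgHyp D r q.1) q.2 - cor μ (avgHyp D r q.1)|} ≤ 1 / 8 := by
  have hms : MeasurableSet {q : (Fin T → Fin m → X × Bool) × (Fin N → X × Bool) |
      t ≤ |empCor (avgHyp D r q.1) q.2 - cor μ (avgHyp D r q.1)|} :=
    measurableSet_le measurable_const (((measurable_empCor D hr).sub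
      ((measurable_cor μ (measurable_avgHyp D hr)).comp measurable_fst)).abs)
  rw [Measure.prod_apply hms]
  calc _ ≤ ∫⁻ _a : Fin T → Fin m → X × Bool, (1 / 8 : ENNReal)
        ∂(Measure.pi fun _ : Fin T => Measure.pi fun _ : Fin m => μ) := by
        refine lintegral_mono fun a => ?_
        refine chebyshev_mean μ (f := fun z => avgHyp D r a z.1 * sgn z.2) ?_ ?_ hN ht hNt
        · exact ((measurable_avgHyp D hr).comp (measurable_const.prodMk measurable_fst)).mul
            (measurable_sgn.comp measurable_snd)
        · exact fun z => (abs_mul_sgn _ _).le.trans (abs_avgHyp_le D h01 a _)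
    _ = 1 / 8 := by simp

end learner

lemma sample_size_le {m : ℕ} (hm : 1 ≤ m) {ε : ℝ} (hε0 : 0 < ε) (hε1 : ε < 1) :
    72 * m ^ 2 * m + ⌈72 * (m : ℝ) ^ 2 / ε ^ 2⌉₊ ≤
      ⌈145 * ((m : ℝ) + 2) ^ 3 * (1 + Real.log ((m : ℝ) + 2)) / ε ^ 2⌉₊ := by
  have hm1 : (1 : ℝ) ≤ m := by exact_mod_cast hm
  have hlog : 0 ≤ Real.log ((m : ℝ) + 2) := Real.log_nonneg (by linarith)
  have hNle : (⌈72 * (m : ℝ) ^ 2 / ε ^ 2⌉₊ : ℝ) ≤ 72 * (m : ℝ) ^ 2 / ε ^ 2 + 1 :=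
    (Nat.ceil_lt_add_one (by positivity)).le
  have hε2 : ε ^ 2 ≤ 1 := pow_le_one₀ hε0.le hε1.le
  have hm23 : (m : ℝ) ^ 2 ≤ (m : ℝ) ^ 3 := pow_le_pow_right₀ hm1 (by norm_num)
  have hm3 : (1 : ℝ) ≤ (m : ℝ) ^ 3 := one_le_pow₀ hm1
  have key : ((72 * m ^ 2 * m + ⌈72 * (m : ℝ) ^ 2 / ε ^ 2⌉₊ : ℕ) : ℝ) ≤
      145 * ((m : ℝ) + 2) ^ 3 * (1 + Real.log ((m : ℝ) + 2)) / ε ^ 2 := by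
    calc ((72 * m ^ 2 * m + ⌈72 * (m : ℝ) ^ 2 / ε ^ 2⌉₊ : ℕ) : ℝ)
        = 72 * (m : ℝ) ^ 3 + ⌈72 * (m : ℝ) ^ 2 / ε ^ 2⌉₊ := by push_cast; ring
      _ ≤ 72 * (m : ℝ) ^ 3 + (72 * (m : ℝ) ^ 2 / ε ^ 2 + 1) := by gcongr
      _ ≤ 72 * ((m : ℝ) ^ 3 / ε ^ 2) + (72 * ((m : ℝ) ^ 3 / ε ^ 2) + (m : ℝ) ^ 3 / ε ^ 2) := by
        have h1 : (m : ℝ) ^ 3 ≤ (m : ℝ) ^ 3 / ε ^ 2 := by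
          rw [le_div_iff₀ (by positivity)]; nlinarith
        have h2 : 72 * (m : ℝ) ^ 2 / ε ^ 2 ≤ 72 * ((m : ℝ) ^ 3 / ε ^ 2) := by
          rw [mul_div_assoc]; gcongr
        linarith
      _ = 145 * (m : ℝ) ^ 3 * 1 / ε ^ 2 := by ring
      _ ≤ _ := by gcongr <;> linarith
  exact_mod_cast key.trans (Nat.le_ceil _)

/-- Here `e` and `c` are the true and empirical correlations of the averaged hypothesis and `E` is
the mean correlation. If `δ ≤ M`, then `e > g`, so the hypothesis passes the test, and it suffices
since `M ≤ 1`. If `M < δ`, the target is below `-g * ε`: zero suffices, and so does any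
hypothesis that passes the test. -/
lemma threshold_arith {g δ ε M E e c : ℝ} (hg : 0 < g) (hδ : 0 < δ) (hε0 : 0 < ε) (hε1 : ε < 1)
    (hM : M ≤ 1) (hE : δ ≤ M → g * 2 ≤ E) (he : -g < e - E) (hc1 : -(g * ε) < c - e)
    (hc2 : c - e < g * ε) :
    (0 < c → g * (M - δ - ε) ≤ e) ∧ (c ≤ 0 → g * (M - δ - ε) ≤ 0) := by
  have hgε : g * ε < g * 1 := mul_lt_mul_of_pos_left hε1 hg
  rcases le_or_gt δ M with h | h
  · have hE' := hE h
    have h1 : g * (M - δ - ε) ≤ g * 1 := mul_le_mul_of_nonneg_left (by linarith) hg.le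
    exact ⟨fun _ => by linarith, fun _ => by linarith⟩
  · have h1 : g * (M - δ - ε) ≤ g * (-ε) := mul_le_mul_of_nonneg_left (by linarith) hg.le
    have h2 : 0 < g * ε := mul_pos hg hε0
    exact ⟨fun _ => by linarith, fun _ => by linarith⟩

lemma three_quarters_le_of_cover {Ω : Type*} [MeasurableSpace Ω] (Q : Measure Ω)
    [IsProbabilityMeasure Q] {G B₁ B₂ : Set Ω} (hcover : Set.univ ⊆ G ∪ (B₁ ∪ B₂))
    (hB1 : Q B₁ ≤ 1 / 8) (hB2 : Q B₂ ≤ 1 / 8) : (3 / 4 : ENNReal) ≤ Q G := by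
  have h1 : (1 : ENNReal) ≤ Q G + 1 / 4 := by
    calc (1 : ENNReal) = Q Set.univ := measure_univ.symm
      _ ≤ Q (G ∪ (B₁ ∪ B₂)) := measure_mono hcover
      _ ≤ Q G + (Q B₁ + Q B₂) :=
        (measure_union_le _ _).trans (by gcongr; exact measure_union_le _ _)
      _ ≤ Q G + (1 / 8 + 1 / 8) := by gcongr
      _ = Q G + 1 / 4 := by
        congr 1
        rw [ENNReal.div_add_div_same, ENNReal.div_eq_div_iff] <;> norm_num
  have h34 : (3 / 4 : ENNReal) = 1 - 1 / 4 := by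
    refine ENNReal.eq_sub_of_add_eq (by simp) ?_
    rw [ENNReal.div_add_div_same, show (3 + 1 : ENNReal) = 4 by norm_num]
    exact ENNReal.div_self (by norm_num) (by norm_num)
  rw [h34]
  exact tsub_le_iff_right.2 h1

/-- the paper's Lemma 3.2, Refutation to Weak Agnostic Learner, with explicit
provable parameters. There is an absolute constant `C` such that the following holds. Let
`δ ∈ (0,1)` and suppose `𝓒` has a `δ`-refutation test over `𝒟` with `m ≥ 1` samples. Then for
every `ε ∈ (0,1)`, `𝓒` has a `(γ, α)`-weak agnostic learner over `𝒟` with `γ = 1/(3m)`,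
`α = (δ+ε)/(3m)`, using at most `⌈C·(m+2)³·(1 + log(m+2))/ε²⌉` samples. -/
theorem refutation_to_weak_agnostic_learner :
    ∃ C : ℝ, 0 < C ∧
      ∀ (X : Type u) (_ : MeasurableSpace X) (D : Measure X),
        IsProbabilityMeasure D →
        ∀ (𝓒 : Set (X → Bool)), 𝓒.Nonempty → (∀ c ∈ 𝓒, Measurable c) →
        ∀ (δ : ℝ), δ ∈ Set.Ioo (0 : ℝ) 1 →
        ∀ (m : ℕ), 1 ≤ m →
        ∀ (r : (Fin m → X × Bool) → ℝ), IsRefutationTest D 𝓒 δ m r →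
        ∀ (ε : ℝ), ε ∈ Set.Ioo (0 : ℝ) 1 →
        ∃ S : ℕ,
          S ≤ ⌈C * ((m : ℝ) + 2) ^ 3 * (1 + Real.log ((m : ℝ) + 2)) / ε ^ 2⌉₊ ∧
          ∃ L : (Fin S → X × Bool) → X → ℝ,
            IsWeakAgnosticLearner D 𝓒 (1 / (3 * (m : ℝ))) ((δ + ε) / (3 * (m : ℝ))) S L := by
  -- `72 m³` samples for the blocks, `72 m² / ε² + 1` fresh ones, in total at most `145 m³ / ε²`.
  refine ⟨145, by norm_num, ?_⟩
  intro X _ D hDp 𝓒 _ _ δ hδ m hm r hrt ε hε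
  obtain ⟨hr, h01, hcomp, hsound⟩ := hrt
  have hm1 : (1 : ℝ) ≤ m := by exact_mod_cast hm
  have hm0 : (0 : ℝ) < m := by linarith
  have hε0 : 0 < ε := hε.1
  have hε1 : ε < 1 := hε.2
  let T : ℕ := 72 * m ^ 2
  let N : ℕ := ⌈72 * (m : ℝ) ^ 2 / ε ^ 2⌉₊
  have hT : 0 < T := by positivity
  have hN : 0 < N := Nat.ceil_pos.2 (by positivity)
  have hTt : 8 ≤ (T : ℝ) * (1 / (3 * (m : ℝ))) ^ 2 := by
    simp only [T]; push_cast
    apply le_of_eq; field_simp; norm_num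
  have hNt : 8 ≤ (N : ℝ) * (ε / (3 * (m : ℝ))) ^ 2 := by
    calc (8 : ℝ) = 72 * (m : ℝ) ^ 2 / ε ^ 2 * (ε / (3 * (m : ℝ))) ^ 2 := by
          field_simp; norm_num
      _ ≤ _ := by gcongr; exact Nat.le_ceil _
  obtain ⟨φ, hφ⟩ := exists_split (X × Bool) T m N
  refine ⟨T * m + N, ?_, fun s => learner D r (φ s), ?_, fun s x => learner_mem D h01 _ x, ?_⟩
  · exact sample_size_le hm hε0 hε1
  · exact (measurable_learner D hr).comp ((φ.measurable.comp measurable_fst).prodMk measurable_snd)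
  intro μ hμ hμD
  set M := ⨆ c ∈ 𝓒, cor μ (fun x => sgn (c x)) with hM
  have hM1 : M ≤ 1 := opt_le_one 𝓒 μ
  set E := ∫ z, cor μ (hybridHyp D r z) ∂(Measure.pi fun _ : Fin m => μ) with hE
  have hEM : δ ≤ M → 2 / (3 * (m : ℝ)) ≤ E := by
    intro h
    have h2 := hcomp μ hμ hμD h
    rw [hE, integral_cor_hybridHyp hμD hr h01]
    calc 2 / (3 * (m : ℝ)) = 2 / (m : ℝ) * (2 / 3 - 1 / 3) := by field_simp; norm_num
      _ ≤ _ := by gcongr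
  let Q := (Measure.pi fun _ : Fin T => Measure.pi fun _ : Fin m => μ).prod
      (Measure.pi fun _ : Fin N => μ)
  let B1 : Set ((Fin T → Fin m → X × Bool) × (Fin N → X × Bool)) :=
    {q | 1 / (3 * (m : ℝ)) ≤ |cor μ (avgHyp D r q.1) - E|}
  let B2 : Set ((Fin T → Fin m → X × Bool) × (Fin N → X × Bool)) :=
    {q | ε / (3 * (m : ℝ)) ≤ |empCor (avgHyp D r q.1) q.2 - cor μ (avgHyp D r q.1)|}
  have hB1 : Q B1 ≤ 1 / 8 := bad_block_le D hr h01 μ hT (by positivity) hTt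
  have hB2 : Q B2 ≤ 1 / 8 := bad_test_le D hr h01 μ hN (by positivity) hNt
  let G : Set ((Fin T → Fin m → X × Bool) × (Fin N → X × Bool)) :=
    {q | 1 / (3 * (m : ℝ)) * M - (δ + ε) / (3 * (m : ℝ)) ≤ cor μ (learner D r q)}
  have hcover : Set.univ ⊆ G ∪ (B1 ∪ B2) := by
    intro q _
    by_contra hq
    simp only [Set.mem_union, not_or] at hq
    obtain ⟨hG, h1, h2⟩ := hq
    have h1' : _ ∧ _ := abs_lt.1 (lt_of_not_ge (a := |cor μ (avgHyp D r q.1) - E|) h1)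
    have h2' : _ ∧ _ := abs_lt.1 (lt_of_not_ge
      (a := |empCor (avgHyp D r q.1) q.2 - cor μ (avgHyp D r q.1)|) h2)
    apply hG
    change 1 / (3 * (m : ℝ)) * M - (δ + ε) / (3 * (m : ℝ)) ≤ cor μ (learner D r q)
    have hg : 0 < 1 / (3 * (m : ℝ)) := by positivity
    rw [show ε / (3 * (m : ℝ)) = 1 / (3 * (m : ℝ)) * ε by ring] at h2'
    rw [show 2 / (3 * (m : ℝ)) = 1 / (3 * (m : ℝ)) * 2 by ring] at hEM
    rw [show 1 / (3 * (m : ℝ)) * M - (δ + ε) / (3 * (m : ℝ)) =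
      1 / (3 * (m : ℝ)) * (M - δ - ε) by ring]
    have harith := threshold_arith hg hδ.1 hε0 hε1 hM1 hEM h1'.1 h2'.1 h2'.2
    by_cases hpos : 0 < empCor (avgHyp D r q.1) q.2
    · have hL : learner D r q = avgHyp D r q.1 := by
        funext x; simp [learner, hpos]
      rw [hL]
      exact harith.1 hpos
    · have hL : learner D r q = fun _ => 0 := by
        funext x; simp [learner, hpos]
      have h0 : cor μ (learner D r q) = 0 := by rw [hL]; simp [cor]
      rw [h0]
      exact harith.2 (not_lt.1 hpos)
  have hGm : (Measure.pi fun _ : Fin (T * m + N) => μ)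
      {s | 1 / (3 * (m : ℝ)) * M - (δ + ε) / (3 * (m : ℝ)) ≤ cor μ (learner D r (φ s))} = Q G :=
    (hφ μ hμ).measure_preimage_equiv G
  rw [hGm]
  exact three_quarters_le_of_cover Q hcover hB1 hB2
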